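/- arXiv:2109.05914 — 5 statements merged into one kernel-verified Lean document; each statement's English description precedes it below -/
import Mathlib

section
/- If K is an algebraically closed field, π is a ring automorphism of K with π ≠ id and π ∘ π = id, and i ∈ K satisfies i² = -1, then π(i) = -i and -i ≠ i. -/
/-- Pincus's lemma: if `K` is an algebraically closed field, `π` is a ring
automorphism of `K` with `π ≠ id` and `π ∘ π = id`, and `i ∈ K` satisfies
`i² = -1`, then `π i = -i` and `-i ≠ i`. -/
theorem stmt0 {K : Type*} [Field K] [IsAlgClosed K]
    (π : K ≃+* K) (hne : π ≠ RingEquiv.refl K)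
    (hinv : ∀ x : K, π (π x) = x)
    (i : K) (hi : i ^ 2 = -1) :
    π i = -i ∧ -i ≠ i := by
  obtain ⟨a, ha⟩ : ∃ a, π a ≠ a := by
    by_contra! h
    exact hne (RingEquiv.ext h)
  have hd : a - π a ≠ 0 := fun h => ha (sub_eq_zero.mp h).symm
  have hi0 : i ≠ 0 := by
    rintro rfl
    norm_num at hi
  have h2 : (2 : K) ≠ 0 := by
    intro h2
    -- x with π x = x + 1
    obtain ⟨x, hx⟩ : ∃ x, π x = x + 1 := by
      refine ⟨a / (a - π a), ?_⟩
      have hd' : π a - a ≠ 0 := sub_ne_zero.mpr ha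
      rw [map_div₀, map_sub, hinv, div_add_one hd, div_eq_div_iff hd' hd]
      linear_combination (a * (a - π a)) * h2
    obtain ⟨y, hy⟩ : ∃ y, y ^ 2 + y = (x ^ 2 + x) * x := by
      let p : Polynomial K := Polynomial.X ^ 2 + Polynomial.X - Polynomial.C ((x ^ 2 + x) * x)
      have hp : p.degree = 2 := by
        simp only [p]
        compute_degree!
      obtain ⟨y, hy⟩ := IsAlgClosed.exists_root p (by rw [hp]; decide)
      refine ⟨y, ?_⟩
      simp [p, Polynomial.IsRoot] at hy
      linear_combination hy
    have hy' := congrArg π hy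
    simp only [map_add, map_mul, map_pow, hx] at hy'
    have hs : (y + π y - x) * (y + π y - x - 1) = 0 := by
      linear_combination hy + hy' + (y * π y - y - π y - x * (y + π y) + 3 * x ^ 2 + 3 * x + 1 + x ^ 3) * h2
    rcases mul_eq_zero.mp hs with h | h
    · have h' := congrArg π h
      simp only [map_add, map_sub, map_zero, hinv, hx] at h'
      exact one_ne_zero (α := K) (by linear_combination h - h')
    · have h' := congrArg π h
      simp only [map_add, map_sub, map_zero, map_one, hinv, hx] at h'
      exact one_ne_zero (α := K) (by linear_combination h - h')
  have hneg : ∀ b : K, -b = b → b = 0 := fun b hb =>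
    (mul_eq_zero.mp (show (2 : K) * b = 0 by linear_combination -hb)).resolve_left h2
  refine ⟨?_, fun h => hi0 (hneg i h)⟩
  have hpi : π i ^ 2 = i ^ 2 := by rw [← map_pow, hi, map_neg, map_one]
  rcases sq_eq_sq_iff_eq_or_eq_neg.mp hpi with h | h
  · exfalso
    obtain ⟨b, hb⟩ := IsAlgClosed.exists_pow_nat_eq (a - π a) (n := 2) (by norm_num)
    have hb0 : b ≠ 0 := by
      rintro rfl
      exact hd (by rw [← hb]; norm_num)
    have hb' := congrArg π hb
    rw [map_pow, map_sub, hinv] at hb'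
    have hbb : π b ^ 2 = (i * b) ^ 2 := by
      linear_combination hb' + hb - b ^ 2 * hi
    rcases sq_eq_sq_iff_eq_or_eq_neg.mp hbb with hc | hc
    · have := hinv b
      rw [hc, map_mul, h, hc] at this
      exact hb0 (hneg b (by linear_combination this - b * hi))
    · have := hinv b
      rw [hc, map_neg, map_mul, h, hc] at this
      exact hb0 (hneg b (by linear_combination this - b * hi))
  · exact h
end

section
/- If (P, ≤) is a partially ordered set whose underlying set is well-orderable, every antichain in P is finite, and every chain in P is countable, then P is countable. -/
theorem exists_uncountable_incomp {P : Type*} [PartialOrder P]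
    (hchain : ∀ C : Set P, IsChain (· ≤ ·) C → C.Countable)
    (X : Set P) (hX : ¬ X.Countable) :
    ∃ x ∈ X, ¬ {y ∈ X | ¬ x ≤ y ∧ ¬ y ≤ x}.Countable := by
  by_contra hcon
  push Not at hcon
  apply hX
  let M : Set X := maxChain (fun a b : X => (a : P) ≤ (b : P))
  have hM : IsMaxChain (fun a b : X => (a : P) ≤ (b : P)) M := maxChain_spec
  have hC : (Subtype.val '' M).Countable := by
    apply hchain
    rintro _ ⟨a, ha, rfl⟩ _ ⟨b, hb, rfl⟩ hab
    exact hM.1 ha hb (fun h => hab (congrArg _ h))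
  have hU : (⋃ c ∈ Subtype.val '' M, {y ∈ X | ¬ c ≤ y ∧ ¬ y ≤ c}).Countable := by
    apply hC.biUnion
    rintro _ ⟨a, ha, rfl⟩
    exact hcon a a.2
  refine (hC.union hU).mono ?_
  intro y hy
  by_contra hn
  have h1 : IsChain (fun a b : X => (a : P) ≤ (b : P)) (insert ⟨y, hy⟩ M) := by
    apply hM.1.insert
    intro b hb _
    by_contra h2
    push Not at h2
    apply hn
    right
    simp only [Set.mem_iUnion]
    exact ⟨b, ⟨b, hb, rfl⟩, hy, h2.2, h2.1⟩
  have h2 := hM.2 h1 (Set.subset_insert _ _)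
  apply hn
  left
  refine ⟨⟨y, hy⟩, ?_, rfl⟩
  rw [h2]
  exact Set.mem_insert _ _

/-- If `(P, ≤)` is a partially ordered set whose underlying set is well-orderable,
every antichain in `P` is finite, and every chain in `P` is countable, then `P` is
countable. -/
theorem stmt1 {P : Type*} [PartialOrder P]
    (hwo : ∃ r : P → P → Prop, IsWellOrder P r)
    (hanti : ∀ A : Set P, IsAntichain (· ≤ ·) A → A.Finite)
    (hchain : ∀ C : Set P, IsChain (· ≤ ·) C → C.Countable) :
    Countable P := by
  by_contra hP
  choose f hf hf' using exists_uncountable_incomp hchain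
  let next : {X : Set P // ¬ X.Countable} → {X : Set P // ¬ X.Countable} :=
    fun X => ⟨_, hf' X.1 X.2⟩
  let S : ℕ → {X : Set P // ¬ X.Countable} := fun n =>
    next^[n] ⟨Set.univ, fun h => hP (Set.countable_univ_iff.mp h)⟩
  have hS : ∀ n, S (n + 1) = next (S n) := fun n => Function.iterate_succ_apply' _ _ _
  have hanti' : Antitone (fun n => (S n).1) := by
    apply antitone_nat_of_succ_le
    intro n
    rw [hS]
    exact fun y hy => hy.1
  let x : ℕ → P := fun n => f (S n).1 (S n).2
  have key : ∀ m n, m < n → ¬ x m ≤ x n ∧ ¬ x n ≤ x m := by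
    intro m n hmn
    have h1 : x n ∈ (S (m + 1)).1 := hanti' (Nat.succ_le_of_lt hmn) (hf (S n).1 (S n).2)
    rw [hS] at h1
    exact h1.2
  have hinj : Function.Injective x := by
    intro m n h
    rcases lt_trichotomy m n with hl | hl | hl
    · exact absurd h.le (key m n hl).1
    · exact hl
    · exact absurd h.le (key n m hl).2
  refine Set.infinite_range_of_injective hinj (hanti _ ?_)
  rintro _ ⟨m, rfl⟩ _ ⟨n, rfl⟩ hne
  rcases lt_trichotomy m n with hl | hl | hl
  · exact (key m n hl).1
  · exact absurd (congrArg x hl) hne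
  · exact (key n m hl).2
end

section
/- Let ℵ_α be a regular infinite cardinal and assume UT(ℵ_α, ℵ_α, ℵ_α). If (P, ≤) is a partially ordered set whose underlying set is well-orderable, all antichains in P are finite, all chains in P have cardinality at most ℵ_α, and there exists at least one chain of cardinality ℵ_α, then P has cardinality ℵ_α. -/
universe u

/-- If `ℵ_α` is a regular infinite cardinal and `UT(ℵ_α, ℵ_α, ℵ_α)` holds (the union
of a family of cardinality `ℵ_α` of sets each of cardinality `ℵ_α` has cardinality
`ℵ_α`), and `(P, ≤)` is a poset whose underlying set is well-orderable, all antichains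
in `P` are finite, all chains in `P` have cardinality at most `ℵ_α`, and at least one
chain has cardinality `ℵ_α`, then `P` has cardinality `ℵ_α`. -/
theorem stmt2 (α : Ordinal.{u}) (hreg : (Cardinal.aleph α).IsRegular)
    (hUT : ∀ (X : Type u) (A : Set (Set X)),
      Cardinal.mk A = Cardinal.aleph α →
      (∀ a ∈ A, Cardinal.mk a = Cardinal.aleph α) →
      Cardinal.mk (⋃₀ A) = Cardinal.aleph α)
    (P : Type u) [PartialOrder P]
    (hwo : ∃ r : P → P → Prop, IsWellOrder P r)
    (hanti : ∀ A : Set P, IsAntichain (· ≤ ·) A → A.Finite)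
    (hchain : ∀ C : Set P, IsChain (· ≤ ·) C → Cardinal.mk C ≤ Cardinal.aleph α)
    (hex : ∃ C : Set P, IsChain (· ≤ ·) C ∧ Cardinal.mk C = Cardinal.aleph α) :
    Cardinal.mk P = Cardinal.aleph α := by
  classical
  obtain ⟨C₀, hC₀, hC₀c⟩ := hex
  refine le_antisymm ?_ (hC₀c ▸ Cardinal.mk_set_le C₀)
  have hinf : Cardinal.aleph0 ≤ Cardinal.aleph α := Cardinal.aleph0_le_aleph α
  by_contra hlt
  rw [not_le] at hlt
  -- elements of `X` incomparable to `x`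
  let N : Set P → P → Set P := fun X x => {y | y ∈ X ∧ ¬ x ≤ y ∧ ¬ y ≤ x}
  by_cases H : ∀ X : Set P, Cardinal.aleph α < Cardinal.mk X →
      ∃ x ∈ X, Cardinal.aleph α < Cardinal.mk (N X x)
  · -- build an infinite antichain
    have hne : Nonempty P := by
      rw [← Cardinal.mk_ne_zero_iff]
      exact (lt_of_le_of_lt (zero_le) hlt).ne'
    choose! g hg hN using H
    let f : ℕ → Set P := fun n => Nat.rec Set.univ (fun _ X => N X (g X)) n
    have fs : ∀ n, f (n + 1) = N (f n) (g (f n)) := fun n => rfl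
    have hf : ∀ n : ℕ, Cardinal.aleph α < Cardinal.mk (↥(f n)) := by
      intro n
      induction n with
      | zero => change _ < Cardinal.mk (Set.univ : Set P); rwa [Cardinal.mk_univ]
      | succ n ih => rw [fs]; exact hN _ ih
    have hanti' : Antitone f := antitone_nat_of_succ_le (fun n y hy => by
      rw [fs] at hy; exact hy.1)
    have key : ∀ m n, m < n → ¬ g (f m) ≤ g (f n) ∧ ¬ g (f n) ≤ g (f m) := by
      intro m n hmn
      have h1 : g (f n) ∈ f (m + 1) := hanti' hmn (hg _ (hf n))
      rw [fs] at h1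
      exact h1.2
    have hinj : Function.Injective (fun n => g (f n)) := by
      intro m n h
      by_contra hne
      rcases lt_or_gt_of_ne hne with h' | h'
      · exact (key _ _ h').1 (le_of_eq h)
      · exact (key _ _ h').1 (le_of_eq h.symm)
    refine Set.infinite_range_of_injective hinj (hanti _ ?_)
    rintro _ ⟨m, rfl⟩ _ ⟨n, rfl⟩ hne hle
    rcases lt_trichotomy m n with h | h | h
    · exact (key _ _ h).1 hle
    · exact hne (by rw [h])
    · exact (key _ _ h).2 hle
  · push Not at H
    obtain ⟨X, hX, hXN⟩ := H
    let M : Set X := maxChain (fun a b : X => a.1 ≤ b.1)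
    have hM : IsMaxChain (fun a b : X => a.1 ≤ b.1) M := maxChain_spec
    have hMc : Cardinal.mk M ≤ Cardinal.aleph α := by
      rw [← Cardinal.mk_image_eq (s := M) Subtype.val_injective]
      apply hchain
      rintro _ ⟨a, ha, rfl⟩ _ ⟨b, hb, rfl⟩ hne
      exact hM.1 ha hb (fun h => hne (by rw [h]))
    have hcov : X ⊆ (Subtype.val '' M) ∪ ⋃ c : M, N X c.1.1 := by
      intro y hy
      by_contra hcon
      rw [Set.mem_union, not_or] at hcon
      obtain ⟨h1, h2⟩ := hcon
      have hy1 : (⟨y, hy⟩ : X) ∉ M := fun h => h1 ⟨_, h, rfl⟩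
      have hch : IsChain (fun a b : X => a.1 ≤ b.1) (insert ⟨y, hy⟩ M) := by
        refine hM.1.insert ?_
        intro b hb _
        by_contra hc
        rw [not_or] at hc
        exact h2 (Set.mem_iUnion.2 ⟨⟨b, hb⟩, hy, hc.2, hc.1⟩)
      have := hM.2 hch (Set.subset_insert _ _)
      exact hy1 (this ▸ Set.mem_insert _ _)
    refine absurd hX (not_lt.2 ?_)
    refine (Cardinal.mk_le_mk_of_subset hcov).trans ((Cardinal.mk_union_le _ _).trans ?_)
    refine Cardinal.add_le_of_le hinf ?_ ?_
    · rw [Cardinal.mk_image_eq Subtype.val_injective]; exact hMc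
    · refine (Cardinal.mk_iUnion_le _).trans ?_
      refine (mul_le_mul' hMc (ciSup_le' fun c => hXN _ c.1.2)).trans ?_
      rw [Cardinal.mul_eq_self hinf]
end

section
/- Let X be a set and A an infinite well-orderable set such that there is no surjection from X onto A, and let f : A → P(X) \ {∅} be a function assigning to each element of A a non-empty subset of X. Then for every positive integer p there exists a p-element subset F of A such that ⋂_{a ∈ F} f(a) is non-empty. -/
/-- If `A` is an infinite well-orderable set, there is no surjection from `X` onto
`A`, and `f : A → P(X) \ {∅}` assigns a non-empty subset of `X` to each element of
`A`, then for every positive integer `p` there is a `p`-element subset `F` of `A`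
such that `⋂_{a ∈ F} f a` is non-empty. -/
theorem stmt7 {X A : Type*} [Infinite A]
    (hwo : ∃ r : A → A → Prop, IsWellOrder A r)
    (hns : ¬ ∃ g : X → A, Function.Surjective g)
    (f : A → Set X) (hf : ∀ a : A, (f a).Nonempty) :
    ∀ p : ℕ, 0 < p → ∃ F : Finset A, F.card = p ∧ (⋂ a ∈ F, f a).Nonempty := by
  intro p _
  choose c hc using hf
  have key : ∃ x, (c ⁻¹' {x}).Infinite := by
    by_contra! h
    have hfin : ∀ x, (c ⁻¹' {x}).Finite := fun x => by simpa using h x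
    rcases finite_or_infinite X with hX | hX
    · obtain ⟨x, hx⟩ := Finite.exists_infinite_fiber c
      exact (Set.infinite_coe_iff.mp hx) (hfin x)
    · have hcnt : ∀ x, ∃ e : c ⁻¹' {x} → ℕ, Function.Injective e := fun x =>
        (hfin x).countable.exists_injective_nat
      choose e he using hcnt
      have hinj : Function.Injective (fun a : A => ((c a, e (c a) ⟨a, rfl⟩) : X × ℕ)) := by
        intro a b hab
        simp only [Prod.mk.injEq] at hab
        obtain ⟨h1, h2⟩ := hab
        have : ∀ x (hx : c a = x), e (c a) ⟨a, rfl⟩ = e x ⟨a, hx⟩ := by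
          rintro x rfl; rfl
        rw [this _ h1] at h2
        exact congrArg Subtype.val (he _ h2)
      have hXN : Nonempty (X × ℕ ≃ X) := by
        apply Cardinal.eq.mp
        simp [Cardinal.mk_prod]
      obtain ⟨E⟩ := hXN
      exact hns ⟨_, Function.invFun_surjective (E.injective.comp hinj)⟩
  obtain ⟨x, hx⟩ := key
  obtain ⟨F, hF, hcard⟩ := hx.exists_subset_card_eq p
  refine ⟨F, hcard, x, ?_⟩
  simp only [Set.mem_iInter]
  intro a ha
  have : c a = x := hF ha
  exact this ▸ hc a
end

section
/- For all integers m, n ≥ 2, the number of spanning trees of the complete bipartite graph K_{m,n} is n^{m-1} m^{n-1}; that is, the number of spanning subgraphs T of K_{m,n} (whose vertex set is the disjoint union of a fixed m-element set and a fixed n-element set, and whose edges join only vertices in different parts) such that T is a tree (connected and acyclic) equals n^{m-1} m^{n-1}. -/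
namespace Scoins

open SimpleGraph

variable {V : Type*}

/-- All vertices reach the root under iteration. -/
def Reaches (r : V) (f : V → V) : Prop := ∀ v, ∃ k : ℕ, f^[k] v = r

/-- The graph of a parent function. -/
def pgraph (f : V → V) : SimpleGraph V := SimpleGraph.fromRel (fun v w => f v = w)

lemma pgraph_adj (f : V → V) (v w : V) :
    (pgraph f).Adj v w ↔ v ≠ w ∧ (f v = w ∨ f w = v) := by
  simp [pgraph]

lemma pgraph_connected (r : V) (f : V → V) (hf : Reaches r f) : (pgraph f).Connected := by
  have key : ∀ k : ℕ, ∀ v, (pgraph f).Reachable v (f^[k] v) := by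
    intro k
    induction k with
    | zero => intro v; exact Reachable.refl _
    | succ k ih =>
      intro v
      rw [Function.iterate_succ_apply]
      refine Reachable.trans ?_ (ih (f v))
      by_cases h : v = f v
      · rw [← h]
      · exact Adj.reachable ((pgraph_adj _ _ _).2 ⟨h, Or.inl rfl⟩)
  have : Nonempty V := ⟨r⟩
  refine ⟨fun v w => ?_⟩
  obtain ⟨k, hk⟩ := hf v
  obtain ⟨l, hl⟩ := hf w
  have h1 := key k v
  have h2 := key l w
  rw [hk] at h1
  rw [hl] at h2
  exact h1.trans h2.symm

lemma pgraph_isTree [Finite V] (r : V) (f : V → V) (hr : f r = r) (hf : Reaches r f) :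
    (pgraph f).IsTree := by
  have hc := pgraph_connected r f hf
  rw [isTree_iff_connected_and_card]
  refine ⟨hc, le_antisymm ?_ hc.card_vert_le_card_edgeSet_add_one⟩
  classical
  have := Fintype.ofFinite V
  have hsub : (pgraph f).edgeSet ⊆ (fun v => s(v, f v)) '' ({r}ᶜ : Set V) := by
    intro e
    induction e with
    | _ v w =>
      intro h
      rw [mem_edgeSet, pgraph_adj] at h
      obtain ⟨hne, h | h⟩ := h
      · refine ⟨v, ?_, by simp [h]⟩
        rintro rfl
        exact hne (hr.symm.trans h)
      · refine ⟨w, ?_, by simp [h, Sym2.eq_swap]⟩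
        rintro rfl
        exact hne (h.symm.trans hr)
  have h1 : (pgraph f).edgeSet.ncard ≤ ({r}ᶜ : Set V).ncard :=
    (Set.ncard_le_ncard hsub (Set.toFinite _)).trans (Set.ncard_image_le (Set.toFinite _))
  have h2 := Set.ncard_add_ncard_compl ({r} : Set V)
  rw [Set.ncard_singleton] at h2
  rw [Nat.card_coe_set_eq]
  omega

lemma pgraph_inj (r : V) (f g : V → V) (hfr : f r = r) (hgr : g r = r) (hf : Reaches r f)
    (hfne : ∀ v, v ≠ r → v ≠ f v) (h : pgraph f = pgraph g) : f = g := by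
  have key : ∀ k : ℕ, ∀ v, f^[k] v = r → f v = g v := by
    intro k
    induction k with
    | zero => intro v hv; simp at hv; rw [hv, hfr, hgr]
    | succ k ih =>
      intro v hv
      rw [Function.iterate_succ_apply] at hv
      have h1 := ih _ hv
      by_cases hvr : v = r
      · rw [hvr, hfr, hgr]
      have hadj : (pgraph g).Adj v (f v) := by
        rw [← h, pgraph_adj]; exact ⟨hfne v hvr, Or.inl rfl⟩
      rw [pgraph_adj] at hadj
      rcases hadj.2 with h2 | h2
      · exact h2.symm
      · exfalso
        rw [← h1] at h2
        have hfv : f v ≠ r := by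
          intro h3; rw [h3, hfr] at h2; exact hvr h2.symm
        have : ∀ l : ℕ, f^[l] v = v ∨ f^[l] v = f v := by
          intro l
          induction l with
          | zero => left; rfl
          | succ l ihl =>
            rw [Function.iterate_succ_apply']
            rcases ihl with h4 | h4 <;> rw [h4]
            · right; rfl
            · left; exact h2
        obtain ⟨l, hl⟩ := hf v
        rcases this l with h4 | h4
        · exact hvr (h4.symm.trans hl)
        · exact hfv (h4.symm.trans hl)
  funext v
  obtain ⟨k, hk⟩ := hf v
  exact key k v hk

lemma exists_parent (G : SimpleGraph V) (hG : G.Connected) (r v : V) (hv : v ≠ r) :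
    ∃ w, G.Adj v w ∧ G.dist w r < G.dist v r := by
  obtain ⟨p, hp⟩ := hG.exists_walk_length_eq_dist v r
  cases p with
  | nil => exact absurd rfl hv
  | cons h q =>
    refine ⟨_, h, ?_⟩
    rw [← hp, Walk.length_cons]
    exact Nat.lt_succ_of_le (dist_le q)

lemma pgraph_surj [Finite V] (r : V) (G : SimpleGraph V) (hG : G.IsTree) :
    ∃ f : V → V, f r = r ∧ (∀ v, v ≠ r → G.Adj v (f v)) ∧ Reaches r f ∧ pgraph f = G := by
  classical
  choose! p hp1 hp2 using exists_parent G hG.connected r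
  let f : V → V := fun v => if v = r then r else p v
  have hfr : f r = r := by simp [f]
  have hfv : ∀ v, v ≠ r → f v = p v := fun v hv => by simp [f, hv]
  have hadj : ∀ v, v ≠ r → G.Adj v (f v) := fun v hv => by rw [hfv v hv]; exact hp1 v hv
  have hreach : Reaches r f := by
    have : ∀ d : ℕ, ∀ v, G.dist v r ≤ d → ∃ k : ℕ, f^[k] v = r := by
      intro d
      induction d with
      | zero =>
        intro v hv
        exact ⟨0, hG.connected.dist_eq_zero_iff.1 (Nat.le_zero.1 hv)⟩
      | succ d ih =>
        intro v hv
        by_cases h : v = r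
        · exact ⟨0, h⟩
        · have := hp2 v h
          obtain ⟨k, hk⟩ := ih (f v) (by rw [hfv v h]; omega)
          exact ⟨k + 1, hk⟩
    exact fun v => this _ v le_rfl
  refine ⟨f, hfr, hadj, hreach, ?_⟩
  have hle : pgraph f ≤ G := by
    intro v w h
    rw [pgraph_adj] at h
    obtain ⟨hne, h | h⟩ := h
    · subst h
      exact hadj v (by rintro rfl; exact hne hfr.symm)
    · subst h
      exact (hadj w (by rintro rfl; exact hne hfr)).symm
  exact le_antisymm hle
    ((isTree_iff_minimal_connected.1 hG).2 (pgraph_connected r f hreach) hle)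

/-- Extension of a parent function on non-root vertices. -/
noncomputable def ext (r : V) (g : {v : V // v ≠ r} → V) (v : V) : V :=
  open Classical in if h : v ≠ r then g ⟨v, h⟩ else r

lemma ext_root (r : V) (g : {v : V // v ≠ r} → V) : ext r g r = r := by simp [ext]

lemma ext_ne (r : V) (g : {v : V // v ≠ r} → V) (v : {v : V // v ≠ r}) :
    ext r g v = g v := by simp [ext, v.2]

lemma card_trees [Finite V] (r : V) (H : SimpleGraph V) :
    Nat.card {G : SimpleGraph V // G ≤ H ∧ G.IsTree} =
    Nat.card {g : {v : V // v ≠ r} → V // (∀ v : {v : V // v ≠ r}, H.Adj v.1 (g v)) ∧ Reaches r (ext r g)} := by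
  symm
  refine Nat.card_congr (Equiv.ofBijective (fun g => ⟨pgraph (ext r g.1), ?_, ?_⟩) ⟨?_, ?_⟩)
  · intro v w h
    rw [pgraph_adj] at h
    have hadj : ∀ v, v ≠ r → H.Adj v (ext r g.1 v) := fun v hv => by
      rw [ext_ne r g.1 ⟨v, hv⟩]; exact g.2.1 ⟨v, hv⟩
    obtain ⟨hne, h | h⟩ := h
    · subst h
      exact hadj v (by rintro rfl; exact hne (ext_root _ _).symm)
    · subst h
      exact (hadj w (by rintro rfl; exact hne (ext_root _ _))).symm
  · exact pgraph_isTree r _ (ext_root _ _) g.2.2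
  · rintro ⟨f, hf1, hf2⟩ ⟨g, hg1, hg2⟩ h
    have h' : pgraph (ext r f) = pgraph (ext r g) := congrArg Subtype.val h
    have := pgraph_inj r _ _ (ext_root r f) (ext_root r g) hf2 (fun v hv => by
      rw [ext_ne r f ⟨v, hv⟩]; exact (hf1 ⟨v, hv⟩).ne) h'
    apply Subtype.ext
    funext v
    show f v = g v
    rw [← ext_ne r f, ← ext_ne r g, this]
  · rintro ⟨G, hG, hT⟩
    obtain ⟨f, h1, h2, h3, h4⟩ := pgraph_surj r G hT
    have hext : ext r (fun v => f v.1) = f := by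
      funext v
      by_cases h : v = r
      · subst h; rw [ext_root, h1]
      · exact ext_ne r _ ⟨v, h⟩
    refine ⟨⟨fun v => f v.1, fun v => hG (h2 v.1 v.2), by rw [hext]; exact h3⟩, ?_⟩
    apply Subtype.ext
    show pgraph (ext r (fun v => f v.1)) = G
    rw [hext, h4]

section det

variable [Fintype V] [DecidableEq V]

/-- The row matrix of a parent function. -/
def pmat (r : V) (g : {v : V // v ≠ r} → V) : Matrix {v : V // v ≠ r} {v : V // v ≠ r} ℚ :=
  fun v w => (if v = w then 1 else 0) - (if g v = w.1 then 1 else 0)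

open Classical in
lemma pmat_det (r : V) (g : {v : V // v ≠ r} → V) :
    (pmat r g).det = if Reaches r (ext r g) then 1 else 0 := by
  split_ifs with h
  · let ht : {v : V // v ≠ r} → ℕ := fun v => Nat.find (h v)
    have hlt : ∀ v w : {v : V // v ≠ r}, g v = w.1 → ht w < ht v := by
      intro v w hvw
      have h1 := Nat.find_spec (h v)
      have h2 : Nat.find (h v) ≠ 0 := by
        intro h0
        rw [h0] at h1
        exact v.2 h1
      obtain ⟨k, hk⟩ := Nat.exists_eq_succ_of_ne_zero h2
      rw [hk, Function.iterate_succ_apply, ext_ne, hvw] at h1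
      have : ht w ≤ k := Nat.find_min' (h w) h1
      show ht w < Nat.find (h v)
      omega
    have hbt : Matrix.BlockTriangular (pmat r g) (fun v => OrderDual.toDual (ht v)) := by
      intro v w hvw
      have hvw : ht v < ht w := hvw
      have h1 : v ≠ w := by rintro rfl; exact lt_irrefl _ hvw
      have h2 : g v ≠ w.1 := fun h2 => by have := hlt v w h2; omega
      simp [pmat, h1, h2]
    rw [hbt.det]
    apply Finset.prod_eq_one
    intro a _
    have : (pmat r g).toSquareBlock (fun v => OrderDual.toDual (ht v)) a = 1 := by
      ext v w
      have h2 : g v.1 ≠ w.1.1 := fun h2 => by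
        have h3 := hlt v.1 w.1 h2
        have h4 : ht v.1 = ht w.1 := v.2.trans w.2.symm
        omega
      simp [Matrix.toSquareBlock, Matrix.toSquareBlockProp, pmat, h2, Matrix.one_apply, Subtype.ext_iff]
    rw [this, Matrix.det_one]
  · rw [← Matrix.exists_mulVec_eq_zero_iff]
    unfold Reaches at h
    push Not at h
    obtain ⟨v0, hv0⟩ := h
    let c : V → ℚ := fun v => if ∃ k : ℕ, (ext r g)^[k] v = r then 0 else 1
    have hcr : c r = 0 := if_pos ⟨0, rfl⟩
    have hcg : ∀ v : {v : V // v ≠ r}, c (g v) = c v := by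
      intro v
      have : (∃ k : ℕ, (ext r g)^[k] (g v) = r) ↔ ∃ k : ℕ, (ext r g)^[k] v = r := by
        rw [← ext_ne r g]
        constructor
        · rintro ⟨k, hk⟩; exact ⟨k + 1, hk⟩
        · rintro ⟨k, hk⟩
          cases k with
          | zero => exact absurd hk v.2
          | succ k => exact ⟨k, hk⟩
      simp only [c, this]
    refine ⟨fun v => c v, ?_, ?_⟩
    · intro h0
      have := congrFun h0 ⟨v0, fun h => hv0 0 h⟩
      simp [c, hv0] at this
    · funext v
      have h1 : ∑ w : {v : V // v ≠ r}, (if g v = w.1 then 1 else 0) * c w = c (g v) := by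
        by_cases hg : g v = r
        · rw [hg, hcr]
          apply Finset.sum_eq_zero
          intro w _
          rw [if_neg (fun h => w.2 h.symm), zero_mul]
        · rw [Finset.sum_eq_single ⟨g v, hg⟩]
          · simp
          · intro w _ hw
            rw [if_neg (fun h => hw (Subtype.ext h.symm)), zero_mul]
          · simp
      simp only [Matrix.mulVec, dotProduct, pmat, sub_mul, Finset.sum_sub_distrib, h1, hcg]
      simp

lemma card_eq_det (r : V) (H : SimpleGraph V) [DecidableRel H.Adj] :
    ((Nat.card {G : SimpleGraph V // G ≤ H ∧ G.IsTree} : ℕ) : ℚ) =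
    Matrix.det (Matrix.of fun v w : {v : V // v ≠ r} =>
      ((if v = w then (H.degree v.1 : ℚ) else 0) - (if H.Adj v.1 w.1 then 1 else 0) : ℚ)) := by
  classical
  rw [card_trees r H]
  have h1 : (fun v w : {v : V // v ≠ r} =>
      ((if v = w then (H.degree v.1 : ℚ) else 0) - (if H.Adj v.1 w.1 then 1 else 0) : ℚ)) =
      fun v => ∑ u ∈ H.neighborFinset v.1, (fun w : {v : V // v ≠ r} =>
        ((if v = w then 1 else 0) - (if u = w.1 then 1 else 0) : ℚ)) := by
    funext v w
    rw [Finset.sum_apply, Finset.sum_sub_distrib]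
    simp
  rw [h1]
  change _ = Matrix.det (fun v => _)
  have h2 := (Matrix.detRowAlternating (n := {v : V // v ≠ r}) (R := ℚ)).toMultilinearMap.map_sum_finset
    (fun v u => fun w : {v : V // v ≠ r} =>
        ((if v = w then 1 else 0) - (if u = w.1 then 1 else 0) : ℚ)) (fun v => H.neighborFinset v.1)
  refine Eq.trans ?_ h2.symm
  have h3 : ∀ g ∈ Fintype.piFinset (fun v : {v : V // v ≠ r} => H.neighborFinset v.1),
      (Matrix.detRowAlternating (n := {v : V // v ≠ r}) (R := ℚ)).toMultilinearMap
        (fun v => fun w : {v : V // v ≠ r} =>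
        ((if v = w then 1 else 0) - (if g v = w.1 then 1 else 0) : ℚ)) =
      if Reaches r (ext r g) then 1 else 0 := fun g _ => pmat_det r g
  rw [Finset.sum_congr rfl h3, Finset.sum_boole, Nat.card_eq_fintype_card, Fintype.card_subtype]
  congr 2
  ext g
  simp

end det

lemma block_det {A B : Type*} [Fintype A] [Fintype B] [DecidableEq A] [DecidableEq B]
    (m n : ℕ) (hA : Fintype.card A + 1 = m) (hB : Fintype.card B = n) (hn : n ≠ 0) :
    (Matrix.fromBlocks ((n : ℚ) • (1 : Matrix A A ℚ)) (Matrix.of fun _ _ => -1)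
      (Matrix.of fun _ _ => -1) ((m : ℚ) • (1 : Matrix B B ℚ))).det =
      (n : ℚ) ^ (m - 1) * (m : ℚ) ^ (n - 1) := by
  have hn' : (n : ℚ) ≠ 0 := by exact_mod_cast hn
  have hm' : (m : ℚ) ≠ 0 := by
    have : m ≠ 0 := by omega
    exact_mod_cast this
  let : Invertible ((n : ℚ) • (1 : Matrix A A ℚ)) :=
    ⟨(n : ℚ)⁻¹ • 1, by simp [smul_smul, hn'], by simp [smul_smul, hn']⟩
  rw [Matrix.det_fromBlocks₁₁]
  have hinv : ⅟((n : ℚ) • (1 : Matrix A A ℚ)) = (n : ℚ)⁻¹ • 1 := rfl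
  have hA' : (Fintype.card A : ℚ) = m - 1 := by rw [← hA]; push_cast; ring
  have e : ((m : ℚ) • (1 : Matrix B B ℚ)) - (Matrix.of fun _ _ => -1 : Matrix B A ℚ) *
      ⅟((n : ℚ) • (1 : Matrix A A ℚ)) * (Matrix.of fun _ _ => -1 : Matrix A B ℚ) =
      (m : ℚ) • (1 + Matrix.replicateCol Unit (fun _ : B => -((m : ℚ) - 1) / (n * m)) *
        Matrix.replicateRow Unit (fun _ : B => (1 : ℚ))) := by
    rw [hinv]
    ext i j
    simp [Matrix.mul_apply, hA']
    field_simp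
    ring
  rw [e, Matrix.det_smul, Matrix.det_smul, Matrix.det_one,
    Matrix.det_one_add_replicateCol_mul_replicateRow, hB]
  have hA2 : Fintype.card A = m - 1 := by omega
  rw [hA2]
  obtain ⟨k, rfl⟩ := Nat.exists_eq_succ_of_ne_zero hn
  simp [dotProduct, hB]
  simp at hn'
  left
  field_simp
  ring

end Scoins

open Scoins in
/-- Scoins's formula: for `m, n ≥ 2`, the number of spanning trees of the complete
bipartite graph `K_{m,n}` (spanning subgraphs of `K_{m,n}` that are trees) equals
`n ^ (m - 1) * m ^ (n - 1)`. -/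
theorem stmt9 (m n : ℕ) (hm : 2 ≤ m) (hn : 2 ≤ n)
    (S T : Type*) [Fintype S] [Fintype T]
    (hS : Fintype.card S = m) (hT : Fintype.card T = n) :
    Nat.card {G : SimpleGraph (S ⊕ T) //
        G ≤ completeBipartiteGraph S T ∧ G.IsTree} = n ^ (m - 1) * m ^ (n - 1) := by
  classical
  have hne : Nonempty S := Fintype.card_pos_iff.1 (by omega)
  obtain ⟨s0⟩ := hne
  have h := card_eq_det (Sum.inl s0) (completeBipartiteGraph S T)
  let e0 : {s : S // s ≠ s0} ⊕ T → {v : S ⊕ T // v ≠ Sum.inl s0} :=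
    Sum.elim (fun s => ⟨Sum.inl s.1, fun h => s.2 (Sum.inl_injective h)⟩)
      (fun t => ⟨Sum.inr t, by simp⟩)
  have he0 : Function.Bijective e0 := by
    constructor
    · rintro (⟨a, ha⟩ | a) (⟨b, hb⟩ | b) hab <;> simp [e0] at hab ⊢ <;> exact hab
    · rintro ⟨a | a, ha⟩
      · exact ⟨Sum.inl ⟨a, fun h => ha (by rw [h])⟩, rfl⟩
      · exact ⟨Sum.inr a, rfl⟩
  let e := Equiv.ofBijective e0 he0
  replace h := h.trans (Matrix.det_submatrix_equiv_self e _).symm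
  have hcard : Fintype.card {s : S // s ≠ s0} + 1 = m := by
    have : Fintype.card {s : S // s ≠ s0} = Fintype.card S - 1 := by simp
    omega
  have hdl : ∀ s : S, (completeBipartiteGraph S T).degree (Sum.inl s) = n := by
    intro s
    rw [← hT, ← SimpleGraph.card_neighborFinset_eq_degree]
    have : (completeBipartiteGraph S T).neighborFinset (Sum.inl s) =
      Finset.univ.map Function.Embedding.inr := by ext (x | x) <;> simp
    rw [this]; simp
  have hdr : ∀ t : T, (completeBipartiteGraph S T).degree (Sum.inr t) = m := by
    intro t
    rw [← hS, ← SimpleGraph.card_neighborFinset_eq_degree]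
    have : (completeBipartiteGraph S T).neighborFinset (Sum.inr t) =
      Finset.univ.map Function.Embedding.inl := by ext (x | x) <;> simp
    rw [this]; simp
  have key := block_det (A := {s : S // s ≠ s0}) (B := T) m n hcard hT (by omega)
  have hM : Matrix.submatrix (Matrix.of fun v w : {v : S ⊕ T // v ≠ Sum.inl s0} =>
      ((if v = w then ((completeBipartiteGraph S T).degree v.1 : ℚ) else 0) -
        (if (completeBipartiteGraph S T).Adj v.1 w.1 then 1 else 0) : ℚ)) e e =
      (Matrix.fromBlocks ((n : ℚ) • (1 : Matrix {s : S // s ≠ s0} {s : S // s ≠ s0} ℚ))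
        (Matrix.of fun _ _ => -1)
        (Matrix.of fun _ _ => -1) ((m : ℚ) • (1 : Matrix T T ℚ))) := by
    ext (a | a) (b | b) <;>
      simp [e, e0, hdl, hdr, Matrix.one_apply, Subtype.ext_iff]
  rw [hM, key] at h
  exact_mod_cast h
end
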